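/- For all real x with 0 < x < π, the following two inequalities hold: 2·x/(sin x) + x/(tan x) < 3 + (x⁴/60)·x/(sin x), and (8/7)·x/(sin x) + x/(tan x) > (15 − x²)/7. -/

import Mathlib

theorem pos_of_deriv_aux (f f' : ℝ → ℝ) (h0 : f 0 = 0) (hd : ∀ x, HasDerivAt f (f' x) x)
    (hp : ∀ x, 0 < x → x < Real.pi → 0 < f' x) : ∀ x, 0 < x → x < Real.pi → 0 < f x := by
  intro x hx hxp
  have hm : StrictMonoOn f (Set.Icc 0 Real.pi) := by
    apply strictMonoOn_of_deriv_pos (convex_Icc _ _)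
    · exact fun y _ => (hd y).continuousAt.continuousWithinAt
    · intro y hy
      rw [interior_Icc] at hy
      rw [(hd y).deriv]
      exact hp y hy.1 hy.2
  have := hm ⟨le_refl _, Real.pi_pos.le⟩ ⟨hx.le, hxp.le⟩ hx
  rwa [h0] at this

theorem wilker_type_corollary (x : ℝ) (hx0 : 0 < x) (hxpi : x < Real.pi) :
    2 * (x / Real.sin x) + x * Real.cos x / Real.sin x < 3 + (x ^ 4 / 60) * (x / Real.sin x) ∧
    (8 / 7) * (x / Real.sin x) + x * Real.cos x / Real.sin x > (15 - x ^ 2) / 7 := by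
  have hs := Real.sin_pos_of_pos_of_lt_pi hx0 hxpi
  have S := Real.hasDerivAt_sin
  have C := Real.hasDerivAt_cos
  have I := fun y : ℝ => hasDerivAt_id' y
  have P := fun (n : ℕ) (y : ℝ) => hasDerivAt_pow n y
  have F2 := pos_of_deriv_aux (fun y => y * Real.cos y - Real.sin y + y ^ 3 / 3)
    (fun y => y * (y - Real.sin y)) (by simp)
    (fun y => by
      refine HasDerivAt.congr_deriv ((((I y).mul (C y)).sub (S y)).add ((P 3 y).div_const 3)) ?_
      push_cast; ring)
    (fun y h _ => mul_pos h (sub_pos.2 (Real.sin_lt h)))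
  have F1 := pos_of_deriv_aux
    (fun y => 2 * Real.cos y + y * Real.sin y + y ^ 4 / 12 - 2) _ (by simp)
    (fun y => by
      refine HasDerivAt.congr_deriv (((((C y).const_mul 2).add ((I y).mul (S y))).add ((P 4 y).div_const 12)).sub_const 2) ?_
      push_cast; ring) F2
  have F := pos_of_deriv_aux
    (fun y => 3 * Real.sin y + y ^ 5 / 60 - 2 * y - y * Real.cos y) _ (by simp)
    (fun y => by
      refine HasDerivAt.congr_deriv (((((S y).const_mul 3).add ((P 5 y).div_const 60)).sub ((I y).const_mul 2)).sub
        ((I y).mul (C y))) ?_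
      push_cast; ring) F1
  have G3 := pos_of_deriv_aux (fun y => Real.sin y - y * Real.cos y)
    (fun y => y * Real.sin y) (by simp)
    (fun y => by
      refine HasDerivAt.congr_deriv ((S y).sub ((I y).mul (C y))) ?_
      push_cast; ring)
    (fun y h h' => mul_pos h (Real.sin_pos_of_pos_of_lt_pi h h'))
  have G2 := pos_of_deriv_aux
    (fun y => 3 * Real.sin y - 3 * (y * Real.cos y) - y ^ 2 * Real.sin y)
    (fun y => y * (Real.sin y - y * Real.cos y)) (by simp)
    (fun y => by
      refine HasDerivAt.congr_deriv ((((S y).const_mul 3).sub (((I y).mul (C y)).const_mul 3)).sub ((P 2 y).mul (S y))) ?_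
      push_cast; ring)
    (fun y h h' => mul_pos h (G3 y h h'))
  have G1 := pos_of_deriv_aux
    (fun y => 8 - 8 * Real.cos y - 5 * (y * Real.sin y) + y ^ 2 * Real.cos y) _ (by simp)
    (fun y => by
      refine HasDerivAt.congr_deriv (((((C y).const_mul 8).const_sub 8).sub (((I y).mul (S y)).const_mul 5)).add
        ((P 2 y).mul (C y))) ?_
      push_cast; ring) G2
  have G := pos_of_deriv_aux
    (fun y => 8 * y + 7 * (y * Real.cos y) - 15 * Real.sin y + y ^ 2 * Real.sin y) _ (by simp)
    (fun y => by
      refine HasDerivAt.congr_deriv (((((I y).const_mul 8).add (((I y).mul (C y)).const_mul 7)).sub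
        ((S y).const_mul 15)).add ((P 2 y).mul (S y))) ?_
      push_cast; ring) G1
  have hF := F x hx0 hxpi
  have hG := G x hx0 hxpi
  constructor
  · have e : 3 + (x ^ 4 / 60) * (x / Real.sin x) -
        (2 * (x / Real.sin x) + x * Real.cos x / Real.sin x) =
        (3 * Real.sin x + x ^ 5 / 60 - 2 * x - x * Real.cos x) / Real.sin x := by
      field_simp
      ring
    have := div_pos hF hs
    linarith
  · have e : (8 / 7) * (x / Real.sin x) + x * Real.cos x / Real.sin x - (15 - x ^ 2) / 7 =
        (8 * x + 7 * (x * Real.cos x) - 15 * Real.sin x + x ^ 2 * Real.sin x) / Real.sin x / 7 := by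
      field_simp
      ring
    have := div_pos hG hs
    linarith
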